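/- The function x ↦ g₂(x)/g₁(x) is strictly increasing on ℝ (note g₁(x) > 0 for all x ∈ ℝ, so the quotient is well defined). -/

import Mathlib

open MeasureTheory

/-- The standard normal density. -/
noncomputable def normPDF (x : ℝ) : ℝ := Real.exp (-x ^ 2 / 2) / Real.sqrt (2 * Real.pi)

/-- The standard normal cumulative distribution function. -/
noncomputable def normCDF (x : ℝ) : ℝ := ∫ t in Set.Iic x, normPDF t

/-- `g₁(x) = x·Φ(x) + φ(x)`, equal to `E[(Z+x)₊]` for standard normal `Z`. -/
noncomputable def g1 (x : ℝ) : ℝ := x * normCDF x + normPDF x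

/-- `g₂(x) = (x²+1)·Φ(x) + x·φ(x)`, equal to `E[(Z+x)₊²]` for standard normal `Z`. -/
noncomputable def g2 (x : ℝ) : ℝ := (x ^ 2 + 1) * normCDF x + x * normPDF x

/-- The inverse of `g₁` (on its range `(0,∞)`). -/
noncomputable def g1inv : ℝ → ℝ := Function.invFun g1

/-- `g = g₂ ∘ g₁⁻¹`. -/
noncomputable def gfn (t : ℝ) : ℝ := g2 (g1inv t)

/-!
The proof iterates a monotone form of L'Hôpital's rule: if `f` and `g` tend to `0` at `-∞`,
`g' > 0` and `f' / g'` is strictly increasing, then so is `f / g`. Since `g₂' = 2 g₁`, `g₁' = Φ`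
and `Φ' = φ`, two applications reduce the monotonicity of `g₂ / g₁` to that of `Φ / φ`, whose
derivative is `g₁ / φ > 0` because `φ' = -x φ`.
-/

open Filter Set Topology

lemma lt_of_strictMonoOn_Iic_of_tendsto_atBot {α β : Type*} [LinearOrder α] [NoMinOrder α]
    [LinearOrder β] [TopologicalSpace β] [OrderClosedTopology β] {f : α → β} {a : α} {l : β}
    (hf : StrictMonoOn f (Iic a)) (hl : Tendsto f atBot (𝓝 l)) : l < f a := by
  obtain ⟨b, hb⟩ := exists_lt a
  have : Nonempty α := ⟨a⟩
  have hlb : l ≤ f b := by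
    refine le_of_tendsto hl ?_
    filter_upwards [eventually_le_atBot b] with c hc
    exact hf.monotoneOn (hc.trans hb.le) hb.le hc
  exact hlb.trans_lt (hf hb.le self_mem_Iic hb)

section MonotoneLHopital

variable {f f' g g' : ℝ → ℝ}

lemma pos_of_hasDerivAt_pos_of_tendsto_atBot (hf : ∀ x, HasDerivAt f (f' x) x)
    (hf' : ∀ x, 0 < f' x) (hl : Tendsto f atBot (𝓝 0)) (x : ℝ) : 0 < f x :=
  lt_of_strictMonoOn_Iic_of_tendsto_atBot
    ((strictMono_of_hasDerivAt_pos hf hf').strictMonoOn _) hl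

lemma mul_deriv_lt_deriv_mul_of_strictMono_deriv_div (hf : ∀ x, HasDerivAt f (f' x) x)
    (hg : ∀ x, HasDerivAt g (g' x) x) (hg' : ∀ x, 0 < g' x) (hfl : Tendsto f atBot (𝓝 0))
    (hgl : Tendsto g atBot (𝓝 0)) (hmono : StrictMono fun x => f' x / g' x) (x : ℝ) :
    f x * g' x < f' x * g x := by
  -- Below `x` the function `r * g - f` increases, because `f' / g' < r` there.
  set r := f' x / g' x with hr
  have hderiv (y : ℝ) : HasDerivAt (fun y => r * g y - f y) (r * g' y - f' y) y :=
    ((hg y).const_mul r).sub (hf y)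
  have hincr : StrictMonoOn (fun y => r * g y - f y) (Iic x) := by
    refine strictMonoOn_of_hasDerivWithinAt_pos (convex_Iic x)
      (fun y _ => (hderiv y).continuousAt.continuousWithinAt)
      (fun y _ => (hderiv y).hasDerivWithinAt) fun y hy => ?_
    rw [interior_Iic] at hy
    exact sub_pos.2 ((div_lt_iff₀ (hg' y)).1 (hmono hy))
  have hlim : Tendsto (fun y => r * g y - f y) atBot (𝓝 0) := by
    simpa using (hgl.const_mul r).sub hfl
  have hpos := lt_of_strictMonoOn_Iic_of_tendsto_atBot hincr hlim
  rwa [sub_pos, hr, div_mul_eq_mul_div, lt_div_iff₀ (hg' x)] at hpos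

theorem strictMono_div_of_strictMono_deriv_div (hf : ∀ x, HasDerivAt f (f' x) x)
    (hg : ∀ x, HasDerivAt g (g' x) x) (hg' : ∀ x, 0 < g' x) (hfl : Tendsto f atBot (𝓝 0))
    (hgl : Tendsto g atBot (𝓝 0)) (hmono : StrictMono fun x => f' x / g' x) :
    StrictMono fun x => f x / g x := by
  have hgpos := pos_of_hasDerivAt_pos_of_tendsto_atBot hg hg' hgl
  refine strictMono_of_hasDerivAt_pos (fun x => (hf x).fun_div (hg x) (hgpos x).ne') fun x => ?_
  have hlt := mul_deriv_lt_deriv_mul_of_strictMono_deriv_div hf hg hg' hfl hgl hmono x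
  exact div_pos (sub_pos.2 hlt) (pow_pos (hgpos x) 2)

end MonotoneLHopital

section IntegralIic

variable {E : Type*} [NormedAddCommGroup E] [NormedSpace ℝ E] {f : ℝ → E}

lemma hasDerivAt_integral_Iic [CompleteSpace E] {x : ℝ} (hf : Integrable f)
    (hx : ContinuousAt f x) : HasDerivAt (fun u => ∫ t in Iic u, f t) (f x) x := by
  have hderiv : HasDerivAt (fun u => ∫ t in (0 : ℝ)..u, f t) (f x) x :=
    intervalIntegral.integral_hasDerivAt_right hf.intervalIntegrable
      hf.aestronglyMeasurable.stronglyMeasurableAtFilter hx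
  refine (hderiv.const_add (∫ t in Iic (0 : ℝ), f t)).congr_of_eventuallyEq (.of_forall fun u => ?_)
  exact eq_add_of_sub_eq'
    (intervalIntegral.integral_Iic_sub_Iic hf.integrableOn hf.integrableOn)

lemma norm_integral_Iic_le_mul_exp {C : ℝ} (hf : ∀ x, ‖f x‖ ≤ C * Real.exp x) (x : ℝ) :
    ‖∫ t in Iic x, f t‖ ≤ C * Real.exp x := by
  calc ‖∫ t in Iic x, f t‖ ≤ ∫ t in Iic x, C * Real.exp t :=
        norm_integral_le_of_norm_le ((integrableOn_exp_Iic x).const_mul C) (.of_forall hf)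
    _ = C * Real.exp x := by rw [integral_const_mul, integral_exp_Iic]

end IntegralIic

lemma tendsto_pow_mul_exp_atBot_nhds_zero (n : ℕ) :
    Tendsto (fun x : ℝ => x ^ n * Real.exp x) atBot (𝓝 0) := by
  have h := ((Real.tendsto_pow_mul_exp_neg_atTop_nhds_zero n).comp
    tendsto_neg_atBot_atTop).const_mul ((-1) ^ n)
  rw [mul_zero] at h
  refine h.congr fun x => ?_
  rw [Function.comp_apply, neg_neg, ← mul_assoc, ← mul_pow, neg_one_mul, neg_neg]

lemma tendsto_pow_mul_atBot_nhds_zero_of_norm_le_mul_exp {f : ℝ → ℝ} {C : ℝ}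
    (hf : ∀ x, ‖f x‖ ≤ C * Real.exp x) (n : ℕ) :
    Tendsto (fun x => x ^ n * f x) atBot (𝓝 0) := by
  have hO : f =O[atBot] Real.exp :=
    .of_bound C (.of_forall fun x => by simpa only [Real.norm_eq_abs, Real.abs_exp] using hf x)
  exact ((Asymptotics.isBigO_refl _ _).mul hO).trans_tendsto (tendsto_pow_mul_exp_atBot_nhds_zero n)

lemma normPDF_eq_gaussianPDFReal : normPDF = ProbabilityTheory.gaussianPDFReal 0 1 := by
  ext x
  simp [normPDF, ProbabilityTheory.gaussianPDFReal, div_eq_inv_mul]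

lemma normPDF_pos (x : ℝ) : 0 < normPDF x := by
  unfold normPDF
  positivity

lemma integrable_normPDF : Integrable normPDF :=
  normPDF_eq_gaussianPDFReal ▸ ProbabilityTheory.integrable_gaussianPDFReal 0 1

lemma hasDerivAt_normPDF (x : ℝ) : HasDerivAt normPDF (-x * normPDF x) x := by
  have hexponent : HasDerivAt (fun y : ℝ => -y ^ 2 / 2) (-x) x :=
    ((hasDerivAt_pow 2 x).fun_neg.div_const 2).congr_deriv (by simp [neg_div])
  refine (hexponent.exp.div_const (Real.sqrt (2 * Real.pi))).congr_deriv ?_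
  rw [normPDF]
  ring

lemma norm_normPDF_le (x : ℝ) : ‖normPDF x‖ ≤ Real.exp (1 / 2) * Real.exp x := by
  have hsqrt : 1 ≤ Real.sqrt (2 * Real.pi) := Real.one_le_sqrt.2 (by linarith [Real.pi_gt_three])
  have hexponent : -x ^ 2 / 2 ≤ 1 / 2 + x := by linarith [sq_nonneg (x + 1)]
  calc ‖normPDF x‖ = Real.exp (-x ^ 2 / 2) / Real.sqrt (2 * Real.pi) :=
        Real.norm_of_nonneg (normPDF_pos x).le
    _ ≤ Real.exp (-x ^ 2 / 2) := div_le_self (Real.exp_pos _).le hsqrt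
    _ ≤ Real.exp (1 / 2 + x) := Real.exp_le_exp.2 hexponent
    _ = Real.exp (1 / 2) * Real.exp x := Real.exp_add _ _

lemma tendsto_pow_mul_normPDF_atBot (n : ℕ) :
    Tendsto (fun x => x ^ n * normPDF x) atBot (𝓝 0) :=
  tendsto_pow_mul_atBot_nhds_zero_of_norm_le_mul_exp norm_normPDF_le n

lemma tendsto_pow_mul_normCDF_atBot (n : ℕ) :
    Tendsto (fun x => x ^ n * normCDF x) atBot (𝓝 0) :=
  tendsto_pow_mul_atBot_nhds_zero_of_norm_le_mul_exp
    (norm_integral_Iic_le_mul_exp norm_normPDF_le) n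

lemma tendsto_normCDF_atBot : Tendsto normCDF atBot (𝓝 0) := by
  simpa using tendsto_pow_mul_normCDF_atBot 0

lemma tendsto_g1_atBot : Tendsto g1 atBot (𝓝 0) := by
  simpa [← g1.eq_def] using
    (tendsto_pow_mul_normCDF_atBot 1).add (tendsto_pow_mul_normPDF_atBot 0)

lemma tendsto_g2_atBot : Tendsto g2 atBot (𝓝 0) := by
  have h := ((tendsto_pow_mul_normCDF_atBot 2).add tendsto_normCDF_atBot).add
    (tendsto_pow_mul_normPDF_atBot 1)
  rw [add_zero, add_zero] at h
  refine h.congr fun x => ?_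
  rw [g2]
  ring

lemma hasDerivAt_normCDF (x : ℝ) : HasDerivAt normCDF (normPDF x) x :=
  hasDerivAt_integral_Iic integrable_normPDF (hasDerivAt_normPDF x).continuousAt

lemma hasDerivAt_g1 (x : ℝ) : HasDerivAt g1 (normCDF x) x := by
  refine (((hasDerivAt_id x).mul (hasDerivAt_normCDF x)).add (hasDerivAt_normPDF x)).congr_deriv ?_
  simp only [id_eq]
  ring

lemma hasDerivAt_g2 (x : ℝ) : HasDerivAt g2 (2 * g1 x) x := by
  refine ((((hasDerivAt_pow 2 x).add_const 1).mul (hasDerivAt_normCDF x)).add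
    ((hasDerivAt_id x).mul (hasDerivAt_normPDF x))).congr_deriv ?_
  simp only [id_eq, g1]
  ring

lemma normCDF_pos (x : ℝ) : 0 < normCDF x :=
  pos_of_hasDerivAt_pos_of_tendsto_atBot hasDerivAt_normCDF normPDF_pos tendsto_normCDF_atBot x

lemma g1_pos (x : ℝ) : 0 < g1 x :=
  pos_of_hasDerivAt_pos_of_tendsto_atBot hasDerivAt_g1 normCDF_pos tendsto_g1_atBot x

lemma hasDerivAt_normCDF_div_normPDF (x : ℝ) :
    HasDerivAt (fun y => normCDF y / normPDF y) (g1 x / normPDF x) x := by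
  have hne := (normPDF_pos x).ne'
  refine ((hasDerivAt_normCDF x).fun_div (hasDerivAt_normPDF x) hne).congr_deriv ?_
  rw [g1]
  field_simp
  ring

lemma strictMono_normCDF_div_normPDF : StrictMono fun x => normCDF x / normPDF x :=
  strictMono_of_hasDerivAt_pos hasDerivAt_normCDF_div_normPDF
    fun x => div_pos (g1_pos x) (normPDF_pos x)

lemma strictMono_g1_div_normCDF : StrictMono fun x => g1 x / normCDF x :=
  strictMono_div_of_strictMono_deriv_div hasDerivAt_g1 hasDerivAt_normCDF normPDF_pos
    tendsto_g1_atBot tendsto_normCDF_atBot strictMono_normCDF_div_normPDF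

lemma strictMono_g2_div_g1 : StrictMono fun x => g2 x / g1 x := by
  refine strictMono_div_of_strictMono_deriv_div hasDerivAt_g2 hasDerivAt_g1 normCDF_pos
    tendsto_g2_atBot tendsto_g1_atBot ?_
  simpa only [mul_div_assoc] using strictMono_g1_div_normCDF.const_mul two_pos

/-- `g₁ > 0` everywhere and `x ↦ g₂(x)/g₁(x)` is strictly
increasing on `ℝ`. -/
theorem stmt_9 :
    (∀ x : ℝ, 0 < g1 x) ∧ StrictMono fun x => g2 x / g1 x :=
  ⟨g1_pos, strictMono_g2_div_g1⟩
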